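/- In the HTP-step setting, for every index i ∈ S \ S*, the i-th entry of the least-squares solution x satisfies |x_i| ≤ (1/γ)·√((1+δ)/(1−δ))·r' · |x*_l|, where r' = ‖x*_{S*\S}‖₂ / ‖x*_{S*\{l}}‖₂. -/

import Mathlib

/-!
Let `w` be the part of `x*` off `S` and `u = x - x*_S`, which is supported on `S`. Since `x` solves
the normal equations, `A u - A w = A (x - x*)` is orthogonal to the columns of `A` indexed by `S`,
so `A u` is the orthogonal projection of `A w` and `‖A u‖ ≤ ‖A w‖` (`energy_le_of_orthogonal`).
The restricted isometry property on both sides gives `(1 - δ) ‖u‖² ≤ (1 + δ) ‖w‖²`, and `u_i = x_i`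
for `i ∉ S*`. The dominance condition then only loosens the bound
`|x_i| ≤ √((1 + δ) / (1 - δ)) ‖x*_{S* \ S}‖`, since `|x*_l| / (γ ‖x*_{S* \ {l}}‖) ≥ 1`.
-/

open Matrix Finset

/-- The support of a vector, as a `Finset`. -/
noncomputable def suppF {N : ℕ} (x : Fin N → ℝ) : Finset (Fin N) :=
  Finset.univ.filter fun i => x i ≠ 0

/-- The Euclidean norm of the restriction of `v` to the index set `T`. -/
noncomputable def pnorm {N : ℕ} (T : Finset (Fin N)) (v : Fin N → ℝ) : ℝ :=
  Real.sqrt (∑ i ∈ T, v i ^ 2)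

lemma submatrix_mulVec_of_support {m N : ℕ} (A : Matrix (Fin m) (Fin N) ℝ) (S : Finset (Fin N))
    (z : Fin N → ℝ) (hz : ∀ i, i ∉ S → z i = 0) :
    (A.submatrix id ((↑) : {i // i ∈ S} → Fin N)).mulVec (fun i => z i.1) = A.mulVec z := by
  funext r
  simp only [Matrix.mulVec, dotProduct, Matrix.submatrix_apply, id]
  rw [Finset.sum_coe_sort S (fun i => A r i * z i)]
  exact Finset.sum_subset (Finset.subset_univ S) fun i _ hi => by simp [hz i hi]

lemma suppF_card_le {N : ℕ} (v : Fin N → ℝ) (T : Finset (Fin N)) (h : ∀ i, i ∉ T → v i = 0) :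
    (suppF v).card ≤ T.card := by
  apply Finset.card_le_card
  intro i hi
  by_contra hT
  exact (Finset.mem_filter.mp hi).2 (h i hT)

/-- A lower restricted isometry bound on vectors supported on `S` makes the Gram matrix of the
columns in `S` invertible. -/
lemma isUnit_gram {m N : ℕ} (A : Matrix (Fin m) (Fin N) ℝ) (S : Finset (Fin N)) (c : ℝ) (hc : 0 < c)
    (h : ∀ v : Fin N → ℝ, (∀ i, i ∉ S → v i = 0) →
      c * (∑ i, v i ^ 2) ≤ ∑ r, (A.mulVec v r) ^ 2) :
    IsUnit ((A.submatrix id ((↑) : {i // i ∈ S} → Fin N))ᵀ *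
      A.submatrix id ((↑) : {i // i ∈ S} → Fin N)) := by
  rw [← Matrix.mulVec_injective_iff_isUnit]
  rw [← Matrix.coe_mulVecLin, ← LinearMap.ker_eq_bot, LinearMap.ker_eq_bot']
  intro v hv
  rw [Matrix.mulVecLin_apply, ← Matrix.conjTranspose_eq_transpose_of_trivial,
    Matrix.conjTranspose_mul_self_mulVec_eq_zero] at hv
  set z : Fin N → ℝ := fun i => if hi : i ∈ S then v ⟨i, hi⟩ else 0 with hzdef
  have hz : ∀ i, i ∉ S → z i = 0 := fun i hi => by simp [hzdef, hi]
  have hzv : (fun i : {i // i ∈ S} => z i.1) = v := by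
    funext i
    simp [hzdef]
  have hA : A.mulVec z = 0 := by
    rw [← submatrix_mulVec_of_support A S z hz, hzv, hv]
  have h1 := h z hz
  rw [hA] at h1
  have h2 : ∑ i, z i ^ 2 ≤ 0 := by
    by_contra hcon
    push Not at hcon
    have := mul_pos hc hcon
    simp at h1
    linarith
  funext i
  have h3 : z i.1 ^ 2 ≤ ∑ i, z i ^ 2 :=
    Finset.single_le_sum (f := fun i => z i ^ 2) (fun j _ => sq_nonneg _) (Finset.mem_univ i.1)
  have h4 : z i.1 = 0 := by
    have := sq_nonneg (z i.1)
    exact pow_eq_zero_iff two_ne_zero |>.mp (by linarith)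
  rw [← hzv]
  exact h4

/-- If `p - q` is orthogonal to `p`, then `‖p‖² ≤ ‖q‖²`. -/
lemma energy_le_of_orthogonal {m : ℕ} (p q : Fin m → ℝ) (h : ∑ r, p r * (p r - q r) = 0) :
    ∑ r, p r ^ 2 ≤ ∑ r, q r ^ 2 := by
  have h1 : ∑ r, q r ^ 2 - ∑ r, p r ^ 2 = ∑ r, (p r - q r) ^ 2 - 2 * ∑ r, p r * (p r - q r) := by
    rw [Finset.mul_sum, ← Finset.sum_sub_distrib, ← Finset.sum_sub_distrib]
    exact Finset.sum_congr rfl fun r _ => by ring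
  have h2 : 0 ≤ ∑ r, (p r - q r) ^ 2 := Finset.sum_nonneg fun r _ => sq_nonneg _
  rw [h] at h1
  linarith

/-- HTP step, upper bound on `|x_i|` for `i ∈ S \ S*`. -/
theorem stmt15 (m N s : ℕ) (A : Matrix (Fin m) (Fin N) ℝ) (δ γ : ℝ)
    (hδ0 : 0 ≤ δ) (hδ1 : δ < 1) (hγ : 0 < γ)
    (hRIP : ∀ v : Fin N → ℝ, (suppF v).card ≤ s + 2 →
      (1 - δ) * (∑ i, v i ^ 2) ≤ (∑ r, (A.mulVec v r) ^ 2) ∧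
      (∑ r, (A.mulVec v r) ^ 2) ≤ (1 + δ) * (∑ i, v i ^ 2))
    (xs : Fin N → ℝ) (hxs : (suppF xs).card ≤ s)
    (S : Finset (Fin N)) (hScard : S.card = s)
    (x : Fin N → ℝ)
    (hx0 : ∀ i, i ∉ S → x i = 0)
    (hxls : ∀ i : {i // i ∈ S}, x i.1 =
      ((((A.submatrix id ((↑) : {i // i ∈ S} → Fin N))ᵀ *
          A.submatrix id ((↑) : {i // i ∈ S} → Fin N))⁻¹ *
        (A.submatrix id ((↑) : {i // i ∈ S} → Fin N))ᵀ).mulVec (A.mulVec xs)) i)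
    (l : Fin N) (hl : ∀ i, |xs i| ≤ |xs l|)
    (hne : pnorm ((suppF xs).erase l) xs ≠ 0)
    (hdom : γ * pnorm ((suppF xs).erase l) xs ≤ |xs l|) :
    ∀ i ∈ S \ suppF xs,
      |x i| ≤ (1 / γ) * Real.sqrt ((1 + δ) / (1 - δ)) *
        (pnorm (suppF xs \ S) xs / pnorm ((suppF xs).erase l) xs) * |xs l| := by
  intro i hi
  obtain ⟨hiS, hixs⟩ := Finset.mem_sdiff.mp hi
  have hxsi : xs i = 0 := by simpa [suppF] using hixs
  set B := A.submatrix id ((↑) : {i // i ∈ S} → Fin N) with hB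
  have hG : IsUnit (Bᵀ * B) := isUnit_gram A S (1 - δ) (by linarith) fun v hv =>
    (hRIP v (by have := suppF_card_le v S hv; omega)).1
  -- The normal equations: invertibility of the Gram matrix turns `hxls` into `Bᵀ A x = Bᵀ A x*`.
  have hnormal : Bᵀ.mulVec (A.mulVec x) = Bᵀ.mulVec (A.mulVec xs) := by
    have hxS : (fun j : {i // i ∈ S} => x j.1) =
        ((Bᵀ * B)⁻¹ * Bᵀ).mulVec (A.mulVec xs) := funext hxls
    rw [← submatrix_mulVec_of_support A S x hx0, ← hB, hxS, Matrix.mulVec_mulVec,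
      Matrix.mulVec_mulVec, ← Matrix.mul_assoc,
      Matrix.mul_nonsing_inv _ ((Matrix.isUnit_iff_isUnit_det _).mp hG), Matrix.one_mul]
  set w : Fin N → ℝ := fun j => if j ∈ S then 0 else xs j with hw
  set u : Fin N → ℝ := fun j => if j ∈ S then x j - xs j else 0 with hu
  have huS : ∀ j, j ∉ S → u j = 0 := fun j hj => by simp [hu, hj]
  have huw : u - w = x - xs := by
    funext j
    by_cases hj : j ∈ S
    · simp [hu, hw, hj]
    · simp [hu, hw, hj, hx0 j hj]
  have horth : ∑ r, A.mulVec u r * (A.mulVec u r - A.mulVec w r) = 0 := by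
    change A.mulVec u ⬝ᵥ (A.mulVec u - A.mulVec w) = 0
    rw [← Matrix.mulVec_sub, huw, ← submatrix_mulVec_of_support A S u huS, ← hB,
      ← Matrix.vecMul_transpose, ← Matrix.dotProduct_mulVec, Matrix.mulVec_sub,
      Matrix.mulVec_sub, hnormal, sub_self, dotProduct_zero]
  have henergy := energy_le_of_orthogonal _ _ horth
  have hul := (hRIP u (by have := suppF_card_le u S huS; omega)).1
  have hwu := (hRIP w (by
    have := suppF_card_le w (suppF xs) fun j hj => by
      have : xs j = 0 := by simpa [suppF] using hj
      simp [hw, this]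
    omega)).2
  have hwsum : ∑ j, w j ^ 2 = ∑ j ∈ suppF xs \ S, xs j ^ 2 := by
    rw [← Finset.sum_subset (Finset.subset_univ (suppF xs \ S))]
    · refine Finset.sum_congr rfl fun j hj => ?_
      simp [hw, (Finset.mem_sdiff.mp hj).2]
    · intro j _ hj
      by_cases hjS : j ∈ S
      · simp [hw, hjS]
      · have : xs j = 0 := by simpa [suppF, hjS] using hj
        simp [hw, this]
  have hui : x i ^ 2 ≤ ∑ j, u j ^ 2 := by
    have := Finset.single_le_sum (f := fun j => u j ^ 2) (fun j _ => sq_nonneg _)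
      (Finset.mem_univ i)
    simpa [hu, hiS, hxsi] using this
  have hδ : 0 < 1 - δ := by linarith
  have hcore : |x i| ≤ Real.sqrt ((1 + δ) / (1 - δ)) * pnorm (suppF xs \ S) xs := by
    rw [pnorm, ← Real.sqrt_mul (by positivity), ← hwsum]
    apply Real.abs_le_sqrt
    rw [div_mul_eq_mul_div, le_div_iff₀ hδ]
    nlinarith [mul_le_mul_of_nonneg_left hui hδ.le]
  have hP : 0 < pnorm ((suppF xs).erase l) xs := lt_of_le_of_ne (Real.sqrt_nonneg _) hne.symm
  have hone : 1 ≤ |xs l| / (γ * pnorm ((suppF xs).erase l) xs) := by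
    rwa [le_div_iff₀ (mul_pos hγ hP), one_mul]
  calc |x i| ≤ Real.sqrt ((1 + δ) / (1 - δ)) * pnorm (suppF xs \ S) xs := hcore
    _ ≤ Real.sqrt ((1 + δ) / (1 - δ)) * pnorm (suppF xs \ S) xs *
        (|xs l| / (γ * pnorm ((suppF xs).erase l) xs)) :=
      le_mul_of_one_le_right (mul_nonneg (Real.sqrt_nonneg _) (Real.sqrt_nonneg _)) hone
    _ = _ := by
      field_simp
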